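/- arXiv:2101.10176 — 2 statements merged into one kernel-verified Lean document; each statement's English description precedes it below -/
import Mathlib

section
/- Let n ≥ 3 be an integer and R > 0. Suppose λ ∈ ℝ admits a nonzero function u, continuously differentiable on [0,R] and twice differentiable on (0,R), with u(0) = u(R) = 0 and −u''(t) + ((n−1)/4)·(n−1 + (n−3)/sinh²(t))·u(t) = λ·u(t) on (0,R). Then for v(t) = sin(πt/R) one has (∫₀ᴿ (v'(t)² + ((n−1)/4)·(n−1 + (n+1)/sinh²(t))·v(t)²) dt) / (∫₀ᴿ v(t)² dt) < λ + (n²−1)·π⁴/(12·R³). In particular, the difference between the first Dirichlet eigenvalue of −d²/dt² + V₂ on [0,R] and any Dirichlet eigenvalue of −d²/dt² + V₁ on [0,R] is less than (n²−1)·π⁴/(12·R³); this is the Schrödinger-equation form of the fundamental gap estimate λ₂(B_R) − λ₁(B_R) ≤ C(n)/R³ for geodesic balls B_R ⊂ ℍⁿ when n ≥ 3. -/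
/-- `lam` is a Dirichlet eigenvalue of the Schrödinger operator `-d²/dt² + V` on `[0, R]`. -/
def IsDirichletEigenvalue (V : ℝ → ℝ) (R lam : ℝ) : Prop :=
  ∃ u : ℝ → ℝ,
    (∃ t ∈ Set.Icc (0:ℝ) R, u t ≠ 0) ∧
    ContinuousOn u (Set.Icc 0 R) ∧
    (∀ t ∈ Set.Ioo (0:ℝ) R, DifferentiableAt ℝ u t) ∧
    ContinuousOn (deriv u) (Set.Icc 0 R) ∧
    (∀ t ∈ Set.Ioo (0:ℝ) R, DifferentiableAt ℝ (deriv u) t) ∧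
    u 0 = 0 ∧ u R = 0 ∧
    (∀ t ∈ Set.Ioo (0:ℝ) R, -(deriv (deriv u) t) + V t * u t = lam * u t)

/-- The Rayleigh quotient `R_V[u] = (∫₀ᴿ (u'² + V u²))/(∫₀ᴿ u²)` on `[0, R]`. -/
noncomputable def Rayleigh (V u : ℝ → ℝ) (R : ℝ) : ℝ :=
  (∫ t in (0:ℝ)..R, (deriv u t) ^ 2 + V t * (u t) ^ 2) / (∫ t in (0:ℝ)..R, (u t) ^ 2)

/-- The potential `V₁(t) = ((n−1)/4)·(n−1 + (n−3)/sinh² t)`. -/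
noncomputable def V1 (n : ℕ) (t : ℝ) : ℝ :=
  ((n : ℝ) - 1) / 4 * (((n : ℝ) - 1) + ((n : ℝ) - 3) / (Real.sinh t) ^ 2)

/-- The potential `V₂(t) = ((n−1)/4)·(n−1 + (n+1)/sinh² t)`. -/
noncomputable def V2 (n : ℕ) (t : ℝ) : ℝ :=
  ((n : ℝ) - 1) / 4 * (((n : ℝ) - 1) + ((n : ℝ) + 1) / (Real.sinh t) ^ 2)

/-!
The potential `V₁` is bounded below by `(n - 1)² / 4`, so comparing an eigenfunction with the
positive functions `cos (q (t - R / 2))`, `q < π / R`, gives `(n - 1)² / 4 + (π / R)² ≤ λ`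
(Barta's argument). On the other side, the Rayleigh quotient of `sin (π t / R)` for `V₂` is
`(n - 1)² / 4 + (π / R)²` plus a multiple of `∫₀ᴿ sin² (π t / R) / sinh² t`. As `|sin x| < |x|`,
that integral is less than `(π / R)² ∫₀^∞ t² / sinh² t = (π / R)² π² / 6`; the last value comes
from `1 / sinh² t = ∑ 4 k e^(-2kt)`, which expresses the Mellin transform of `1 / sinh²` by `ζ`.
-/

open Real Set MeasureTheory Filter Topology

lemma hasDerivAt_picone {𝕜 : Type*} [NontriviallyNormedField 𝕜]
    {u u' φ φ' : 𝕜 → 𝕜} {u'' φ'' t : 𝕜}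
    (hu : HasDerivAt u (u' t) t) (hu' : HasDerivAt u' u'' t)
    (hφ : HasDerivAt φ (φ' t) t) (hφ' : HasDerivAt φ' φ'' t) (h0 : φ t ≠ 0) :
    HasDerivAt (fun s => u s * u' s - u s ^ 2 * φ' s / φ s)
      ((u' t - u t * φ' t / φ t) ^ 2 + (u t * u'' - u t ^ 2 * φ'' / φ t)) t := by
  refine ((hu.mul hu').sub (((hu.pow 2).mul hφ').div hφ h0)).congr_deriv ?_
  simp only [Pi.mul_apply, Pi.pow_apply]
  field_simp
  push_cast
  ring

lemma eq_zero_of_hasDerivAt_nonneg_of_eq {f f' : ℝ → ℝ} {a b t : ℝ} (hf : ContinuousOn f (Icc a b))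
    (hf' : ∀ x ∈ Ioo a b, HasDerivAt f (f' x) x) (hnonneg : ∀ x ∈ Ioo a b, 0 ≤ f' x)
    (hab : f a = f b) (ht : t ∈ Ioo a b) : f' t = 0 := by
  have hle : a ≤ b := (ht.1.trans ht.2).le
  have hmono : MonotoneOn f (Icc a b) := by
    refine monotoneOn_of_hasDerivWithinAt_nonneg (convex_Icc a b) hf (f' := f') ?_ ?_ <;>
      rw [interior_Icc]
    exacts [fun x hx => (hf' x hx).hasDerivWithinAt, hnonneg]
  have hconst : ∀ x ∈ Ioo a b, f x = f a := fun x hx =>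
    le_antisymm ((hmono (Ioo_subset_Icc_self hx) (right_mem_Icc.2 hle) hx.2.le).trans_eq hab.symm)
      (hmono (left_mem_Icc.2 hle) (Ioo_subset_Icc_self hx) hx.1.le)
  exact (hf' t ht).unique <| (hasDerivAt_const t (f a)).congr_of_eventuallyEq <|
    eventually_of_mem (isOpen_Ioo.mem_nhds ht) hconst

namespace IsDirichletEigenvalue

variable {V : ℝ → ℝ} {c R lam : ℝ}

theorem le_of_pos_supersolution {μ : ℝ} {φ φ' φ'' : ℝ → ℝ} (h : IsDirichletEigenvalue V R lam)
    (hφc : ContinuousOn φ (Icc 0 R)) (hφc' : ContinuousOn φ' (Icc 0 R))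
    (hφ : ∀ t ∈ Ioo 0 R, HasDerivAt φ (φ' t) t) (hφ' : ∀ t ∈ Ioo 0 R, HasDerivAt φ' (φ'' t) t)
    (hpos : ∀ t ∈ Icc 0 R, 0 < φ t) (hμ : ∀ t ∈ Ioo 0 R, μ * φ t ≤ -φ'' t + V t * φ t) :
    μ ≤ lam := by
  obtain ⟨u, ⟨t₀, ht₀, hne⟩, huc, hu, huc', hu', hu0, huR, heq⟩ := h
  by_contra! hlt
  have ht₀' : t₀ ∈ Ioo 0 R :=
    ⟨ht₀.1.lt_of_ne fun h => hne (h ▸ hu0), ht₀.2.lt_of_ne fun h => hne (h ▸ huR)⟩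
  -- By Picone's identity `G' ≥ (μ - lam) u²`, while `G` vanishes at both endpoints.
  set G : ℝ → ℝ := fun t => u t * deriv u t - u t ^ 2 * φ' t / φ t with hG
  have hGc : ContinuousOn G (Icc 0 R) :=
    (huc.mul huc').sub (((huc.pow 2).mul hφc').div hφc fun t ht => (hpos t ht).ne')
  have hG' : ∀ t ∈ Ioo 0 R, ∃ g, HasDerivAt G g t ∧ (μ - lam) * u t ^ 2 ≤ g := by
    intro t ht
    have hφt := hpos t (Ioo_subset_Icc_self ht)
    refine ⟨_, hasDerivAt_picone (hu t ht).hasDerivAt (hu' t ht).hasDerivAt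
      (hφ t ht) (hφ' t ht) hφt.ne', ?_⟩
    have hu'' : deriv (deriv u) t = (V t - lam) * u t := by linarith [heq t ht]
    have hμt : μ ≤ V t - φ'' t / φ t := by
      rw [← mul_le_mul_iff_left₀ hφt, sub_mul, div_mul_cancel₀ _ hφt.ne']
      linarith [hμ t ht]
    calc (μ - lam) * u t ^ 2 ≤ (V t - φ'' t / φ t - lam) * u t ^ 2 := by gcongr
      _ = u t * deriv (deriv u) t - u t ^ 2 * φ'' t / φ t := by rw [hu'']; ring
      _ ≤ _ := le_add_of_nonneg_left (sq_nonneg _)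
  choose! g hGg hg using hG'
  have hg0 : g t₀ = 0 := eq_zero_of_hasDerivAt_nonneg_of_eq hGc hGg
    (fun t ht => (mul_nonneg (sub_pos.2 hlt).le (sq_nonneg _)).trans (hg t ht))
    (by simp [hG, hu0, huR]) ht₀'
  have hut₀ : 0 < u t₀ ^ 2 := by positivity
  exact (mul_pos (sub_pos.2 hlt) hut₀).not_ge ((hg t₀ ht₀').trans_eq hg0)

theorem add_sq_pi_div_le (h : IsDirichletEigenvalue V R lam) (hR : 0 < R)
    (hV : ∀ t ∈ Ioo 0 R, c ≤ V t) : c + (π / R) ^ 2 ≤ lam := by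
  -- At `q = π / R` the comparison function vanishes at the endpoints, so that value is a limit.
  have hlt : ∀ q ∈ Ioo 0 (π / R), c + q ^ 2 ≤ lam := by
    intro q ⟨hq0, hq⟩
    have hcos : ∀ t ∈ Icc 0 R, 0 < cos (q * (t - R / 2)) := by
      intro t ht
      rw [lt_div_iff₀ hR] at hq
      exact cos_pos_of_mem_Ioo ⟨by nlinarith [ht.1], by nlinarith [ht.2]⟩
    have hlin : ∀ t, HasDerivAt (fun t => q * (t - R / 2)) q t := fun t => by
      simpa using ((hasDerivAt_id t).sub_const (R / 2)).const_mul q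
    refine h.le_of_pos_supersolution (φ := fun t => cos (q * (t - R / 2)))
      (φ' := fun t => -sin (q * (t - R / 2)) * q)
      (φ'' := fun t => -(cos (q * (t - R / 2)) * q) * q)
      (by fun_prop) (by fun_prop) (fun t _ => (hlin t).cos)
      (fun t _ => (hlin t).sin.neg.mul_const q) hcos fun t ht => ?_
    linarith [mul_le_mul_of_nonneg_right (hV t ht) (hcos t (Ioo_subset_Icc_self ht)).le]
  exact le_of_tendsto (f := fun q => c + q ^ 2) (x := 𝓝[<] (π / R))
    (by fun_prop : Continuous fun q : ℝ => c + q ^ 2).continuousWithinAt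
    (eventually_of_mem (Ioo_mem_nhdsLT (by positivity)) hlt)

end IsDirichletEigenvalue

lemma hasSum_inv_sinh_sq {t : ℝ} (ht : 0 < t) :
    HasSum (fun k : ℕ => 4 * k * exp (-(2 * k) * t)) (1 / sinh t ^ 2) := by
  have hlt : exp (-(2 * t)) < 1 := exp_lt_one_iff.2 (by linarith)
  have hgeom := (hasSum_coe_mul_geometric_of_norm_lt_one
    (by rwa [norm_of_nonneg (exp_pos _).le] : ‖exp (-(2 * t))‖ < 1)).mul_left 4
  have hsinh : 4 * (exp (-(2 * t)) / (1 - exp (-(2 * t))) ^ 2) = 1 / sinh t ^ 2 := by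
    have hsq : exp (-(2 * t)) = exp (-t) ^ 2 := by rw [← exp_nat_mul]; push_cast; ring_nf
    have hfac : 1 - exp (-(2 * t)) = 2 * exp (-t) * sinh t := by
      rw [sinh_eq, hsq, exp_neg]
      field_simp
    have hs := (sinh_pos_iff.2 ht).ne'
    rw [hfac, hsq]
    field_simp
    norm_num
  rw [hsinh] at hgeom
  refine hgeom.congr_fun fun k => ?_
  rw [← exp_nat_mul]
  ring_nf

lemma natCast_div_mul_cpow {r : ℝ} (hr : 0 ≤ r) {s : ℂ} (hs : s ≠ 1) (k : ℕ) :
    (k : ℂ) / ((r * k : ℝ) : ℂ) ^ s = 1 / (r : ℂ) ^ s * (1 / (k : ℂ) ^ (s - 1)) := by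
  rcases k.eq_zero_or_pos with rfl | hk
  · simp [Complex.zero_cpow (sub_ne_zero.2 hs)]
  · have hk' : (k : ℂ) ≠ 0 := by exact_mod_cast hk.ne'
    rw [Complex.ofReal_mul, Complex.mul_cpow_ofReal_nonneg hr k.cast_nonneg,
      Complex.ofReal_natCast, Complex.cpow_sub _ _ hk', Complex.cpow_one]
    field_simp

theorem mellin_inv_sinh_sq {s : ℂ} (hs : 2 < s.re) :
    mellin (fun t => ((1 / sinh t ^ 2 : ℝ) : ℂ)) s
      = 4 / 2 ^ s * Complex.Gamma s * riemannZeta (s - 1) := by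
  have hre : 1 < (s - 1).re := by
    rw [Complex.sub_re, Complex.one_re]
    linarith
  have hs1 : s ≠ 1 := sub_ne_zero.1 (Complex.ne_zero_of_one_lt_re hre)
  have hF : ∀ t ∈ Ioi (0 : ℝ), HasSum (fun k : ℕ => 4 * (k : ℂ) * exp (-(2 * k) * t))
      ((1 / sinh t ^ 2 : ℝ) : ℂ) := fun t ht => by
    simpa using Complex.hasSum_ofReal.2 (hasSum_inv_sinh_sq ht)
  have hsummable : Summable fun k : ℕ => ‖(4 * k : ℂ)‖ / (2 * k : ℝ) ^ s.re := by
    refine ((Complex.summable_one_div_nat_cpow.2 hre).mul_left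
      (4 * (1 / ((2 : ℝ) : ℂ) ^ s))).norm.congr fun k => ?_
    rw [mul_assoc, ← natCast_div_mul_cpow zero_le_two hs1, norm_mul, norm_mul, norm_div,
      Complex.norm_cpow_eq_rpow_re_of_nonneg (by positivity) (by linarith), mul_div_assoc]
  have hsum := hasSum_mellin
    (fun k : ℕ => by rcases k.eq_zero_or_pos with rfl | hk <;> [simp; exact .inr (by positivity)])
    (by linarith) hF hsummable
  rw [← hsum.tsum_eq, zeta_eq_tsum_one_div_nat_cpow hre, ← tsum_mul_left]
  refine tsum_congr fun k => ?_
  calc Complex.Gamma s * (4 * k) / ((2 * k : ℝ) : ℂ) ^ s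
      = 4 * Complex.Gamma s * (k / ((2 * k : ℝ) : ℂ) ^ s) := by ring
    _ = 4 / 2 ^ s * Complex.Gamma s * (1 / (k : ℂ) ^ (s - 1)) := by
        rw [natCast_div_mul_cpow zero_le_two hs1, Complex.ofReal_ofNat]
        ring

lemma integral_sq_div_sinh_sq : ∫ t in Ioi 0, t ^ 2 / sinh t ^ 2 = π ^ 2 / 6 := by
  have hmellin : mellin (fun t => ((1 / sinh t ^ 2 : ℝ) : ℂ)) 3
      = ((∫ t in Ioi 0, t ^ 2 / sinh t ^ 2 : ℝ) : ℂ) := by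
    rw [mellin, ← integral_complex_ofReal]
    refine integral_congr_ae (.of_forall fun t => ?_)
    norm_num [div_eq_mul_inv]
  apply Complex.ofReal_injective
  calc ((∫ t in Ioi 0, t ^ 2 / sinh t ^ 2 : ℝ) : ℂ)
      = 4 / 2 ^ (3 : ℂ) * Complex.Gamma 3 * riemannZeta 2 := by
        rw [← hmellin, mellin_inv_sinh_sq (by norm_num)]
        norm_num
    _ = ((π ^ 2 / 6 : ℝ) : ℂ) := by
        rw [riemannZeta_two]
        norm_num

lemma integrableOn_sq_div_sinh_sq : IntegrableOn (fun t => t ^ 2 / sinh t ^ 2) (Ioi 0) :=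
  .of_integral_ne_zero (by rw [integral_sq_div_sinh_sq]; positivity)

lemma intervalIntegrable_sq_div_sinh_sq {R : ℝ} (hR : 0 ≤ R) :
    IntervalIntegrable (fun t => t ^ 2 / sinh t ^ 2) volume 0 R :=
  (intervalIntegrable_iff_integrableOn_Ioc_of_le hR).2
    (integrableOn_sq_div_sinh_sq.mono_set Ioc_subset_Ioi_self)

lemma intervalIntegrable_sin_sq_div_sinh_sq (p : ℝ) {R : ℝ} (hR : 0 ≤ R) :
    IntervalIntegrable (fun t => sin (p * t) ^ 2 / sinh t ^ 2) volume 0 R := by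
  refine (IntervalIntegrable.const_mul (intervalIntegrable_sq_div_sinh_sq hR) (p ^ 2)).mono_fun
    (Measurable.aestronglyMeasurable (by fun_prop)) (.of_forall fun t => ?_)
  beta_reduce
  rw [norm_of_nonneg (by positivity), norm_of_nonneg (by positivity), ← mul_div_assoc, ← mul_pow]
  exact div_le_div_of_nonneg_right sin_sq_le_sq (sq_nonneg _)

lemma integral_sin_sq_div_sinh_sq_lt {p R : ℝ} (hp : p ≠ 0) (hR : 0 < R) :
    ∫ t in 0..R, sin (p * t) ^ 2 / sinh t ^ 2 < p ^ 2 * (π ^ 2 / 6) := by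
  have hsin := intervalIntegrable_sin_sq_div_sinh_sq p hR.le
  have hsq := (intervalIntegrable_sq_div_sinh_sq hR.le).const_mul (p ^ 2)
  calc ∫ t in 0..R, sin (p * t) ^ 2 / sinh t ^ 2
      < ∫ t in 0..R, p ^ 2 * (t ^ 2 / sinh t ^ 2) := by
        rw [← sub_pos, ← intervalIntegral.integral_sub hsq hsin]
        refine intervalIntegral.intervalIntegral_pos_of_pos_on (hsq.sub hsin) (fun t ht => ?_) hR
        rw [sub_pos, ← mul_div_assoc, ← mul_pow]
        exact div_lt_div_of_pos_right (sin_sq_lt_sq (mul_ne_zero hp ht.1.ne'))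
          (pow_pos (sinh_pos_iff.2 ht.1) 2)
    _ ≤ p ^ 2 * ∫ t in Ioi 0, t ^ 2 / sinh t ^ 2 := by
        rw [intervalIntegral.integral_const_mul, intervalIntegral.integral_of_le hR.le]
        refine mul_le_mul_of_nonneg_left (setIntegral_mono_set integrableOn_sq_div_sinh_sq
          (.of_forall fun t => by positivity) Ioc_subset_Ioi_self.eventuallyLE) (sq_nonneg p)
    _ = p ^ 2 * (π ^ 2 / 6) := by rw [integral_sq_div_sinh_sq]

section Rayleigh

variable {R : ℝ}

lemma integral_sin_pi_mul_div_sq (hR : R ≠ 0) : ∫ t in 0..R, sin (π * t / R) ^ 2 = R / 2 := by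
  simp_rw [mul_div_right_comm π]
  rw [intervalIntegral.integral_comp_mul_left (fun x => sin x ^ 2) (by positivity), integral_sin_sq,
    div_mul_cancel₀ π hR, mul_zero, sin_zero, sin_pi, smul_eq_mul]
  field_simp
  ring

lemma integral_cos_pi_mul_div_sq (hR : R ≠ 0) : ∫ t in 0..R, cos (π * t / R) ^ 2 = R / 2 := by
  simp_rw [mul_div_right_comm π]
  rw [intervalIntegral.integral_comp_mul_left (fun x => cos x ^ 2) (by positivity), integral_cos_sq,
    div_mul_cancel₀ π hR, mul_zero, sin_zero, sin_pi, smul_eq_mul]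
  field_simp
  ring

lemma rayleigh_sin_pi_mul_div {V : ℝ → ℝ} (hR : R ≠ 0)
    (hV : IntervalIntegrable (fun t => V t * sin (π * t / R) ^ 2) volume 0 R) :
    Rayleigh V (fun t => sin (π * t / R)) R
      = (π / R) ^ 2 + (∫ t in 0..R, V t * sin (π * t / R) ^ 2) / (R / 2) := by
  have hderiv : ∀ t, deriv (fun t => sin (π * t / R)) t = π / R * cos (π * t / R) := by
    intro t
    have hlin : HasDerivAt (fun t => π * t / R) (π / R) t := by
      simpa using ((hasDerivAt_id t).const_mul π).div_const R
    rw [hlin.sin.deriv, mul_comm]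
  simp_rw [Rayleigh, hderiv, mul_pow]
  rw [intervalIntegral.integral_add (Continuous.intervalIntegrable (by fun_prop) _ _) hV,
    intervalIntegral.integral_const_mul, integral_cos_pi_mul_div_sq hR,
    integral_sin_pi_mul_div_sq hR, add_div, mul_div_cancel_right₀ _ (by positivity)]

lemma rayleigh_add_div_sinh_sq_sin_lt {c d : ℝ} (hd : 0 < d) (hR : 0 < R) :
    Rayleigh (fun t => c + d / sinh t ^ 2) (fun t => sin (π * t / R)) R
      < c + (π / R) ^ 2 + d * π ^ 4 / (3 * R ^ 3) := by
  have hpot : (fun t => (c + d / sinh t ^ 2) * sin (π * t / R) ^ 2)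
      = fun t => c * sin (π * t / R) ^ 2 + d * (sin (π / R * t) ^ 2 / sinh t ^ 2) := by
    ext t
    rw [mul_div_right_comm]
    ring
  have hsin : IntervalIntegrable (fun t => c * sin (π * t / R) ^ 2) volume 0 R :=
    Continuous.intervalIntegrable (by fun_prop) _ _
  have hsinh : IntervalIntegrable (fun t => d * (sin (π / R * t) ^ 2 / sinh t ^ 2)) volume 0 R :=
    (intervalIntegrable_sin_sq_div_sinh_sq (π / R) hR.le).const_mul d
  rw [rayleigh_sin_pi_mul_div hR.ne' (hpot ▸ hsin.add hsinh), hpot,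
    intervalIntegral.integral_add hsin hsinh, intervalIntegral.integral_const_mul,
    intervalIntegral.integral_const_mul, integral_sin_pi_mul_div_sq hR.ne']
  calc (π / R) ^ 2
        + (c * (R / 2) + d * ∫ t in 0..R, sin (π / R * t) ^ 2 / sinh t ^ 2) / (R / 2)
      < (π / R) ^ 2 + (c * (R / 2) + d * ((π / R) ^ 2 * (π ^ 2 / 6))) / (R / 2) := by
        gcongr
        exact integral_sin_sq_div_sinh_sq_lt (by positivity) hR
    _ = c + (π / R) ^ 2 + d * π ^ 4 / (3 * R ^ 3) := by
        field_simp
        ring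

end Rayleigh

lemma le_V1 {n : ℕ} (hn : 3 ≤ n) (t : ℝ) : ((n : ℝ) - 1) ^ 2 / 4 ≤ V1 n t := by
  have hn' : (3 : ℝ) ≤ n := by exact_mod_cast hn
  have hnonneg : 0 ≤ ((n : ℝ) - 1) / 4 * ((n - 3) / sinh t ^ 2) :=
    mul_nonneg (by linarith) (div_nonneg (by linarith) (sq_nonneg _))
  rw [V1]
  linarith

lemma V2_eq_add_div_sinh_sq (n : ℕ) :
    V2 n = fun t => ((n : ℝ) - 1) ^ 2 / 4 + ((n : ℝ) ^ 2 - 1) / 4 / sinh t ^ 2 := by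
  ext t
  rw [V2]
  ring

/-- Schrödinger-equation form of the gap estimate for balls in `ℍⁿ`, `n ≥ 3`: if `λ` is any
Dirichlet eigenvalue of `-d²/dt² + V₁` on `[0, R]`, then for the test function
`v(t) = sin(πt/R)` the Rayleigh quotient of `v` for `V₂` is strictly less than
`λ + (n²−1)π⁴/(12R³)`; in particular `λ₂(B_R) − λ₁(B_R) < (n²−1)π⁴/(12R³)`. -/
theorem gap_estimate_schrodinger_form (n : ℕ) (hn : 3 ≤ n) (R lam : ℝ) (hR : 0 < R)
    (h : IsDirichletEigenvalue (V1 n) R lam) :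
    Rayleigh (V2 n) (fun t => Real.sin (Real.pi * t / R)) R
      < lam + ((n : ℝ) ^ 2 - 1) * Real.pi ^ 4 / (12 * R ^ 3) := by
  have hlam : ((n : ℝ) - 1) ^ 2 / 4 + (π / R) ^ 2 ≤ lam :=
    h.add_sq_pi_div_le hR fun t _ => le_V1 hn t
  have hd : 0 < ((n : ℝ) ^ 2 - 1) / 4 := by
    have hn' : (3 : ℝ) ≤ n := by exact_mod_cast hn
    nlinarith
  calc Rayleigh (V2 n) (fun t => sin (π * t / R)) R
      < ((n : ℝ) - 1) ^ 2 / 4 + (π / R) ^ 2 + ((n : ℝ) ^ 2 - 1) / 4 * π ^ 4 / (3 * R ^ 3) := by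
        rw [V2_eq_add_div_sinh_sq]
        exact rayleigh_add_div_sinh_sq_sin_lt hd hR
    _ = ((n : ℝ) - 1) ^ 2 / 4 + (π / R) ^ 2 + ((n : ℝ) ^ 2 - 1) * π ^ 4 / (12 * R ^ 3) := by
        field_simp
        ring
    _ ≤ lam + ((n : ℝ) ^ 2 - 1) * π ^ 4 / (12 * R ^ 3) := by gcongr
end

section
/- Let n ≥ 2 be an integer, R > 0, and μ ∈ ℝ. Suppose w is a nonzero function, continuously differentiable on [0,R] and twice differentiable on (0,R), with w(0) = w(R) = 0 and −w''(t) + ((n−1)/4)·(n−1 + (n+1)/sinh²(t))·w(t) = μ·w(t) on (0,R), and suppose ∫₀ᴿ w(t)²/sinh²(t) dt < ∞. Then the Rayleigh quotient of w for the potential V₁ satisfies (∫₀ᴿ (w'(t)² + ((n−1)/4)·(n−1 + (n−3)/sinh²(t))·w(t)²) dt)/(∫₀ᴿ w(t)² dt) ≤ μ − (n−1)/sinh²(R). In particular, the first two Dirichlet eigenvalues of the geodesic ball B_R ⊂ ℍⁿ satisfy λ₂(B_R) − λ₁(B_R) ≥ (n−1)/sinh²(R). -/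
/-!
Multiplying `-w'' + V₂ w = μ w` by `w` and integrating by parts shows that the Rayleigh quotient
of `w` for `V₂` is exactly `μ`. Since `1 / sinh²` is decreasing, `V₂ - V₁ = (n - 1) / sinh² t` is
bounded below on `(0, R)` by the constant `(n - 1) / sinh² R`, and adding a constant to a potential
shifts the Rayleigh quotient by that constant.
-/

section

open MeasureTheory Set

section EnergyIntegral

variable {a b : ℝ} {u u' V : ℝ → ℝ}

theorem integral_sq_pos_of_continuousOn (hab : a < b) (hu : ContinuousOn u (Icc a b))
    (hne : ∃ t ∈ Icc a b, u t ≠ 0) : 0 < ∫ t in a..b, u t ^ 2 := by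
  obtain ⟨t, ht, hut⟩ := hne
  exact intervalIntegral.integral_pos hab (hu.pow 2) (fun t _ => sq_nonneg (u t))
    ⟨t, ht, by positivity⟩

theorem intervalIntegrable_sq_add_potential_mul_sq {ρ : ℝ → ℝ} (hu : ContinuousOn u (uIcc a b))
    (hu' : ContinuousOn u' (uIcc a b))
    (hρ : IntervalIntegrable (fun t => u t ^ 2 / ρ t) volume a b) (p q r : ℝ) :
    IntervalIntegrable (fun t => u' t ^ 2 + p * (q + r / ρ t) * u t ^ 2) volume a b := by
  have hsum := (hu'.pow 2).intervalIntegrable.add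
    (((hu.pow 2).intervalIntegrable.const_mul (p * q)).add (hρ.const_mul (p * r)))
  refine hsum.congr fun t _ => ?_
  simp only [Pi.pow_apply]
  ring

theorem integral_sq_add_mul_sq_eq_of_hasDerivAt {μ : ℝ} (hab : a ≤ b)
    (hu : ContinuousOn u (Icc a b)) (hu' : ContinuousOn u' (Icc a b))
    (hderiv : ∀ t ∈ Ioo a b, HasDerivAt u (u' t) t)
    (hode : ∀ t ∈ Ioo a b, HasDerivAt u' ((V t - μ) * u t) t)
    (hint : IntervalIntegrable (fun t => u' t ^ 2 + V t * u t ^ 2) volume a b) :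
    ∫ t in a..b, u' t ^ 2 + V t * u t ^ 2 =
      μ * (∫ t in a..b, u t ^ 2) + (u b * u' b - u a * u' a) := by
  have hμ : IntervalIntegrable (fun t => μ * u t ^ 2) volume a b :=
    ((hu.pow 2).intervalIntegrable_of_Icc hab).const_mul μ
  -- `u''` need not be integrable up to the endpoints, so integrate `(u u')'` as a whole.
  have hprod : ∀ t ∈ Ioo a b, HasDerivAt (fun s => u s * u' s)
      (u' t ^ 2 + V t * u t ^ 2 - μ * u t ^ 2) t := fun t ht =>
    ((hderiv t ht).mul (hode t ht)).congr_deriv (by ring)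
  have hftc := intervalIntegral.integral_eq_sub_of_hasDerivAt_of_le hab (hu.mul hu') hprod
    (hint.sub hμ)
  rw [intervalIntegral.integral_sub hint hμ, intervalIntegral.integral_const_mul,
    sub_eq_iff_eq_add'] at hftc
  exact hftc

end EnergyIntegral

section Rayleigh

variable {R : ℝ} {u V W : ℝ → ℝ}

theorem rayleigh_add_le_rayleigh_of_add_le {c : ℝ} (hR : 0 ≤ R)
    (hpos : 0 < ∫ t in (0 : ℝ)..R, u t ^ 2)
    (hV : IntervalIntegrable (fun t => deriv u t ^ 2 + V t * u t ^ 2) volume 0 R)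
    (hW : IntervalIntegrable (fun t => deriv u t ^ 2 + W t * u t ^ 2) volume 0 R)
    (hVW : ∀ t ∈ Ioo 0 R, V t + c ≤ W t) : Rayleigh V u R + c ≤ Rayleigh W u R := by
  have hc : IntervalIntegrable (fun t => c * u t ^ 2) volume 0 R :=
    (intervalIntegral.intervalIntegrable_of_integral_ne_zero hpos.ne').const_mul c
  unfold Rayleigh
  rw [div_add' _ _ _ hpos.ne', ← intervalIntegral.integral_const_mul,
    ← intervalIntegral.integral_add hV hc]
  refine div_le_div_of_nonneg_right ?_ hpos.le
  refine intervalIntegral.integral_mono_on_of_le_Ioo hR (hV.add hc) hW fun t ht => ?_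
  linarith [mul_le_mul_of_nonneg_right (hVW t ht) (sq_nonneg (u t))]

theorem rayleigh_eq_of_eigenfunction {μ : ℝ} (hR : 0 ≤ R) (hu : ContinuousOn u (Icc 0 R))
    (hu' : ContinuousOn (deriv u) (Icc 0 R)) (hd : ∀ t ∈ Ioo 0 R, DifferentiableAt ℝ u t)
    (hd' : ∀ t ∈ Ioo 0 R, DifferentiableAt ℝ (deriv u) t)
    (hode : ∀ t ∈ Ioo 0 R, -(deriv (deriv u) t) + V t * u t = μ * u t)
    (hbdry : u R * deriv u R = u 0 * deriv u 0) (hpos : 0 < ∫ t in (0 : ℝ)..R, u t ^ 2)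
    (hint : IntervalIntegrable (fun t => deriv u t ^ 2 + V t * u t ^ 2) volume 0 R) :
    Rayleigh V u R = μ := by
  have henergy := integral_sq_add_mul_sq_eq_of_hasDerivAt hR hu hu'
    (fun t ht => (hd t ht).hasDerivAt)
    (fun t ht => (hd' t ht).hasDerivAt.congr_deriv (by linear_combination -hode t ht)) hint
  rw [hbdry, sub_self, add_zero] at henergy
  exact (div_eq_iff hpos.ne').2 henergy

end Rayleigh

theorem V2_eq_V1_add (n : ℕ) (t : ℝ) : V2 n t = V1 n t + ((n : ℝ) - 1) / Real.sinh t ^ 2 := by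
  unfold V1 V2
  ring

theorem V1_add_le_V2 {n : ℕ} (hn : 1 ≤ n) {t R : ℝ} (ht : 0 < t) (htR : t ≤ R) :
    V1 n t + ((n : ℝ) - 1) / Real.sinh R ^ 2 ≤ V2 n t := by
  have hn' : (0 : ℝ) ≤ n - 1 := sub_nonneg.2 (mod_cast hn)
  have : 0 < Real.sinh t := Real.sinh_pos_iff.2 ht
  rw [V2_eq_V1_add]
  gcongr
  exact Real.sinh_le_sinh.2 htR

end

/-- If `w` is a nonzero Dirichlet eigenfunction of `-d²/dt² + V₂` on `[0, R]` with
eigenvalue `μ`, and `∫₀ᴿ w²/sinh² t dt < ∞`, then the Rayleigh quotient of `w` for `V₁` is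
at most `μ − (n−1)/sinh² R`; in particular `λ₂(B_R) − λ₁(B_R) ≥ (n−1)/sinh² R` for geodesic
balls in `ℍⁿ`. -/
theorem fundamental_gap_ball_lower_bound (n : ℕ) (hn : 2 ≤ n) (R μ : ℝ) (hR : 0 < R)
    (w : ℝ → ℝ)
    (hne : ∃ t ∈ Set.Icc (0:ℝ) R, w t ≠ 0)
    (hc : ContinuousOn w (Set.Icc 0 R))
    (hd : ∀ t ∈ Set.Ioo (0:ℝ) R, DifferentiableAt ℝ w t)
    (hc' : ContinuousOn (deriv w) (Set.Icc 0 R))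
    (hd' : ∀ t ∈ Set.Ioo (0:ℝ) R, DifferentiableAt ℝ (deriv w) t)
    (h0 : w 0 = 0) (hRR : w R = 0)
    (hode : ∀ t ∈ Set.Ioo (0:ℝ) R, -(deriv (deriv w) t) + V2 n t * w t = μ * w t)
    (hint : IntervalIntegrable (fun t => (w t) ^ 2 / (Real.sinh t) ^ 2)
      MeasureTheory.volume 0 R) :
    Rayleigh (V1 n) w R ≤ μ - ((n : ℝ) - 1) / (Real.sinh R) ^ 2 := by
  have hcU : ContinuousOn w (Set.uIcc 0 R) := by rwa [Set.uIcc_of_le hR.le]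
  have hcU' : ContinuousOn (deriv w) (Set.uIcc 0 R) := by rwa [Set.uIcc_of_le hR.le]
  have hpos : 0 < ∫ t in (0 : ℝ)..R, w t ^ 2 := integral_sq_pos_of_continuousOn hR hc hne
  have hV1 : IntervalIntegrable (fun t => deriv w t ^ 2 + V1 n t * w t ^ 2)
      MeasureTheory.volume 0 R :=
    intervalIntegrable_sq_add_potential_mul_sq hcU hcU' hint _ _ _
  have hV2 : IntervalIntegrable (fun t => deriv w t ^ 2 + V2 n t * w t ^ 2)
      MeasureTheory.volume 0 R :=
    intervalIntegrable_sq_add_potential_mul_sq hcU hcU' hint _ _ _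
  have hRayleighV2 : Rayleigh (V2 n) w R = μ :=
    rayleigh_eq_of_eigenfunction hR.le hc hc' hd hd' hode (by simp [h0, hRR]) hpos hV2
  rw [le_sub_iff_add_le, ← hRayleighV2]
  exact rayleigh_add_le_rayleigh_of_add_le hR.le hpos hV1 hV2
    fun t ht => V1_add_le_V2 (Nat.one_le_of_lt hn) ht.1 ht.2.le
end
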